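/- arXiv:2008.06309 — 2 statements merged into one kernel-verified Lean document; each statement's English description precedes it below -/
import Mathlib

section
/- Let s be a real number which is not an integer, let m = ⌊s⌋ be its integer floor, and let z > 0 be real. Then (−1)^{m+1} · z^{m+1/2} · q^{m s + s/2 − m(m+1)/2} · θ_q(z q^s) tends to 1 as q tends to 0 from the right (q ranging over (0,1)). -/
open Filter Topology

/-- The q-theta function
`θ_q(x) = (x^{1/2} - x^{-1/2}) ∏_{i=1}^∞ (1 - x q^i)(1 - x⁻¹ q^i)`. -/
noncomputable def qTheta (q x : ℝ) : ℝ :=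
  (Real.sqrt x - (Real.sqrt x)⁻¹) *
    ∏' i : ℕ, (1 - x * q ^ (i + 1)) * (1 - x⁻¹ * q ^ (i + 1))

noncomputable def qP (q y : ℝ) : ℝ := ∏' i : ℕ, (1 + -(y * q ^ i))

lemma qP_mult {q : ℝ} (h0 : 0 < q) (h1 : q < 1) (y : ℝ) :
    Multipliable (fun i : ℕ => (1 + -(y * q ^ i))) := by
  apply multipliable_one_add_of_summable
  simp only [norm_neg, norm_mul, norm_pow]
  apply Summable.mul_left
  apply summable_geometric_of_lt_one (norm_nonneg _)
  rw [Real.norm_eq_abs, abs_of_pos h0]; exact h1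

lemma qP_step {q : ℝ} (h0 : 0 < q) (h1 : q < 1) (y : ℝ) :
    qP q y = (1 - y) * qP q (q * y) := by
  have e : ∀ i : ℕ, (1 + -(y * q ^ (i+1))) = (1 + -(q * y * q ^ i)) := by
    intro i; ring
  unfold qP
  rw [tprod_eq_zero_mul']
  · simp only [e]; congr 1; ring
  · simp only [e]; exact qP_mult h0 h1 _

lemma qTheta_eq {q : ℝ} (h0 : 0 < q) (h1 : q < 1) (x : ℝ) :
    qTheta q x = (Real.sqrt x - (Real.sqrt x)⁻¹) * (qP q (q * x) * qP q (q * x⁻¹)) := by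
  unfold qTheta qP
  rw [← Multipliable.tprod_mul (qP_mult h0 h1 _) (qP_mult h0 h1 _)]
  congr 2
  ext i
  ring

lemma qTheta_step {q : ℝ} (h0 : 0 < q) (h1 : q < 1) {x : ℝ} (hx : 0 < x) :
    qTheta q (q * x) = -(q ^ (-(1/2) : ℝ) * x⁻¹) * qTheta q x := by
  rw [qTheta_eq h0 h1, qTheta_eq h0 h1, qP_step h0 h1 (q * x)]
  have e : q * (q * x)⁻¹ = x⁻¹ := by field_simp
  rw [e, qP_step h0 h1 x⁻¹, Real.rpow_neg h0.le, ← Real.sqrt_eq_rpow, Real.sqrt_mul h0.le]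
  obtain ⟨a, ha, rfl⟩ : ∃ a, 0 < a ∧ q = a ^ 2 :=
    ⟨√q, Real.sqrt_pos.2 h0, (Real.sq_sqrt h0.le).symm⟩
  obtain ⟨b, hb, rfl⟩ : ∃ b, 0 < b ∧ x = b ^ 2 :=
    ⟨√x, Real.sqrt_pos.2 hx, (Real.sq_sqrt hx.le).symm⟩
  rw [Real.sqrt_sq ha.le, Real.sqrt_sq hb.le]
  generalize qP (a^2) (a^2 * (a^2 * b^2)) = A
  generalize qP (a^2) (a^2 * (b^2)⁻¹) = B
  field_simp
  ring

lemma qP_tendsto (y : ℝ → ℝ) (hy : Tendsto y (𝓝[Set.Ioo (0:ℝ) 1] 0) (𝓝 0)) :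
    Tendsto (fun q => qP q (y q)) (𝓝[Set.Ioo (0:ℝ) 1] 0) (𝓝 1) := by
  have hq : Tendsto (fun q : ℝ => q) (𝓝[Set.Ioo (0:ℝ) 1] 0) (𝓝 0) :=
    tendsto_id.mono_left nhdsWithin_le_nhds
  have := tendsto_tprod_one_add_of_dominated_convergence (𝓕 := 𝓝[Set.Ioo (0:ℝ) 1] 0)
    (f := fun q (i : ℕ) => -(y q * q ^ i)) (g := fun _ => (0:ℝ)) (bound := fun i => (1/2:ℝ)^i)
    (summable_geometric_of_lt_one (by norm_num) (by norm_num))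
    (fun i => by
      have := (hy.mul (hq.pow i)).neg
      simpa using this)
    (by
      filter_upwards [self_mem_nhdsWithin, hq.eventually_lt_const (by norm_num : (0:ℝ) < 1/2),
        hy.norm.eventually_lt_const (by norm_num : ‖(0:ℝ)‖ < 1)] with q h1 h2 h3 i
      rw [norm_neg, norm_mul, norm_pow, Real.norm_of_nonneg h1.1.le]
      calc ‖y q‖ * q ^ i ≤ 1 * (1/2)^i := by
            have := h1.1
            gcongr
        _ = _ := one_mul _)
  simpa [qP] using this

noncomputable def qG (z s : ℝ) (m : ℤ) (q : ℝ) : ℝ :=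
  (-1 : ℝ) ^ (m + 1) * z ^ ((m : ℝ) + 1/2) *
          q ^ ((m : ℝ) * s + s/2 - (m : ℝ) * ((m : ℝ) + 1) / 2) *
          qTheta q (z * q ^ s)

lemma qG_step {q z : ℝ} (h0 : 0 < q) (h1 : q < 1) (hz : 0 < z) (s : ℝ) (m : ℤ) :
    qG z (s + 1) (m + 1) q = qG z s m q := by
  unfold qG
  have e : z * q ^ (s + 1) = q * (z * q ^ s) := by
    rw [Real.rpow_add h0, Real.rpow_one]; ring
  have e2 : ((m+1 : ℤ) : ℝ) * (s+1) + (s+1)/2 - ((m+1 : ℤ) : ℝ) * (((m+1 : ℤ) : ℝ) + 1) / 2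
      = ((m : ℝ) * s + s/2 - (m : ℝ) * ((m : ℝ) + 1) / 2) + s + 1/2 := by
    push_cast; ring
  have e3 : ((m+1 : ℤ) : ℝ) + 1/2 = ((m : ℝ) + 1/2) + 1 := by push_cast; ring
  have hqs : 0 < q ^ s := Real.rpow_pos_of_pos h0 _
  have hqh : 0 < q ^ (1/2 : ℝ) := Real.rpow_pos_of_pos h0 _
  rw [e, e2, e3, qTheta_step h0 h1 (by positivity), Real.rpow_add h0 _ (1/2), Real.rpow_add h0 _ s,
    Real.rpow_add hz _ 1, Real.rpow_one, zpow_add_one₀ (by norm_num) (m+1), Real.rpow_neg h0.le]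
  generalize q ^ (1/2 : ℝ) = u at *
  generalize q ^ s = v at *
  field_simp

lemma rpow_t {c : ℝ} (hc : 0 < c) :
    Tendsto (fun q : ℝ => q ^ c) (𝓝[Set.Ioo (0:ℝ) 1] 0) (𝓝 0) := by
  have := (Real.continuousAt_rpow_const 0 c (Or.inr hc.le)).tendsto
  rw [Real.zero_rpow hc.ne'] at this
  exact this.mono_left nhdsWithin_le_nhds

lemma qG_base {z s : ℝ} (hz : 0 < z) (h0 : 0 < s) (h1 : s < 1) :
    Tendsto (qG z s 0) (𝓝[Set.Ioo (0:ℝ) 1] 0) (𝓝 1) := by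
  have t1 : Tendsto (fun q : ℝ => z * q ^ s) (𝓝[Set.Ioo (0:ℝ) 1] 0) (𝓝 0) := by
    simpa using (rpow_t h0).const_mul z
  have t2 : Tendsto (fun q : ℝ => z * q ^ (s+1)) (𝓝[Set.Ioo (0:ℝ) 1] 0) (𝓝 0) := by
    simpa using (rpow_t (by linarith : 0 < s + 1)).const_mul z
  have t3 : Tendsto (fun q : ℝ => z⁻¹ * q ^ (1-s)) (𝓝[Set.Ioo (0:ℝ) 1] 0) (𝓝 0) := by
    simpa using (rpow_t (by linarith : 0 < 1 - s)).const_mul z⁻¹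
  have := (t1.const_sub 1).mul ((qP_tendsto _ t2).mul (qP_tendsto _ t3))
  simp only [sub_zero, mul_one] at this
  refine this.congr' ?_
  filter_upwards [self_mem_nhdsWithin] with q ⟨hq0, hq1⟩
  unfold qG
  have hqs : 0 < q ^ s := Real.rpow_pos_of_pos hq0 _
  have a1 : q * (z * q ^ s) = z * q ^ (s+1) := by
    rw [Real.rpow_add hq0, Real.rpow_one]; ring
  have a2 : q * (z * q ^ s)⁻¹ = z⁻¹ * q ^ (1-s) := by
    rw [Real.rpow_sub hq0, Real.rpow_one]; field_simp
  rw [qTheta_eq hq0 hq1, a1, a2]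
  have a3 : z ^ (((0:ℤ):ℝ) + 1/2) *
      q ^ (((0:ℤ):ℝ) * s + s/2 - ((0:ℤ):ℝ) * (((0:ℤ):ℝ) + 1) / 2) = √(z * q ^ s) := by
    rw [Real.sqrt_eq_rpow, Real.mul_rpow hz.le hqs.le, ← Real.rpow_mul hq0.le]
    norm_num
    left
    congr 1
    ring
  rw [mul_assoc ((-1:ℝ)^((0:ℤ)+1)), a3]
  have hx : 0 < z * q ^ s := by positivity
  have := Real.sq_sqrt hx.le
  have h3 := Real.sqrt_pos.2 hx
  have h4 : √(z * q ^ s) * (√(z * q ^ s))⁻¹ = 1 := mul_inv_cancel₀ h3.ne'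
  simp only [zero_add, zpow_one]
  linear_combination (this - h4) * (qP q (z * q ^ (s+1)) * qP q (z⁻¹ * q ^ (1-s)))

lemma qG_shift {q z : ℝ} (h0 : 0 < q) (h1 : q < 1) (hz : 0 < z) (m : ℤ) :
    ∀ s : ℝ, qG z (s + m) m q = qG z s 0 q := by
  intro s
  induction m using Int.induction_on with
  | zero => simp
  | succ k ih =>
    rw [← ih, ← qG_step h0 h1 hz (s + ((k:ℤ):ℝ))]
    congr 1
    push_cast; ring
  | pred k ih =>
    rw [← ih, ← qG_step h0 h1 hz]
    congr 1
    · push_cast; ring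
    · ring

/-- For non-integer real `s` with floor `m = ⌊s⌋` and real `z > 0`,
`(-1)^{m+1} z^{m+1/2} q^{m s + s/2 - m(m+1)/2} θ_q(z q^s) → 1` as `q → 0⁺`,
with `q` ranging over `(0,1)`. -/
theorem qTheta_asymptotics_nonintegral (s : ℝ) (hs : ∀ k : ℤ, s ≠ (k : ℝ))
    (m : ℤ) (hm : m = ⌊s⌋) (z : ℝ) (hz : 0 < z) :
    Tendsto (fun q : ℝ =>
        (-1 : ℝ) ^ (m + 1) * z ^ ((m : ℝ) + 1/2) *
          q ^ ((m : ℝ) * s + s/2 - (m : ℝ) * ((m : ℝ) + 1) / 2) *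
          qTheta q (z * q ^ s))
      (𝓝[Set.Ioo (0:ℝ) 1] 0) (𝓝 1) := by
  have l1 : (m:ℝ) ≤ s := hm ▸ Int.floor_le s
  have l2 : s < m + 1 := hm ▸ Int.lt_floor_add_one s
  have l3 : (m:ℝ) < s := lt_of_le_of_ne l1 (hs m).symm
  refine (qG_base (s := s - m) hz (by linarith) (by linarith)).congr' ?_
  filter_upwards [self_mem_nhdsWithin] with q ⟨hq0, hq1⟩
  rw [← qG_shift hq0 hq1 hz m, sub_add_cancel]
  rfl
end

section
/- Let m be an integer and let z > 0 be real. Then (−1)^{m} · z^{m−1/2} · q^{m²/2} · θ_q(z q^{m}) tends to 1 − z^{−1} as q tends to 0 from the right (q ranging over (0,1)). -/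
open Filter Topology

lemma qT_mult (q x : ℝ) (h0 : 0 < q) (h1 : q < 1) :
    Multipliable (fun i : ℕ => 1 - x * q ^ (i + 1)) := by
  have hs : Summable (fun i : ℕ => -(x * q) * q ^ i) :=
    (summable_geometric_of_lt_one h0.le h1).mul_left _
  have := Real.multipliable_one_add_of_summable hs
  refine this.congr fun i => ?_
  ring

lemma qT_split (q x : ℝ) (h0 : 0 < q) (h1 : q < 1) :
    ∏' i : ℕ, (1 - x * q ^ (i + 1)) = (1 - x * q) * ∏' i : ℕ, (1 - (x * q) * q ^ (i + 1)) := by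
  have e : ∀ i : ℕ, 1 - (x * q) * q ^ (i + 1) = 1 - x * q ^ (i + 1 + 1) := fun i => by ring
  simp_rw [e]
  rw [tprod_eq_zero_mul' (f := fun i : ℕ => 1 - x * q ^ (i + 1))]
  · simp
  · simpa only [e] using qT_mult q (x * q) h0 h1

lemma qT_eq (q x : ℝ) (h0 : 0 < q) (h1 : q < 1) : qTheta q x =
    (Real.sqrt x - (Real.sqrt x)⁻¹) * ((∏' i : ℕ, (1 - x * q ^ (i + 1))) *
      ∏' i : ℕ, (1 - x⁻¹ * q ^ (i + 1))) := by
  rw [qTheta, (qT_mult q x h0 h1).tprod_mul (qT_mult q x⁻¹ h0 h1)]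

lemma qT_shift (q x : ℝ) (h0 : 0 < q) (h1 : q < 1) (hx : 0 < x) :
    qTheta q (x * q) = -((Real.sqrt q)⁻¹ * x⁻¹) * qTheta q x := by
  rw [qT_eq q _ h0 h1, qT_eq q _ h0 h1, qT_split q x h0 h1, qT_split q (x * q)⁻¹ h0 h1]
  have e : (x * q)⁻¹ * q = x⁻¹ := by field_simp
  rw [e, Real.sqrt_mul hx.le]
  generalize (∏' i : ℕ, (1 - x * q * q ^ (i + 1))) = A
  generalize (∏' i : ℕ, (1 - x⁻¹ * q ^ (i + 1))) = B
  have hs : 0 < Real.sqrt x := Real.sqrt_pos.2 hx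
  have hr : 0 < Real.sqrt q := Real.sqrt_pos.2 h0
  have hs2 : x = Real.sqrt x ^ 2 := (Real.sq_sqrt hx.le).symm
  have hr2 : q = Real.sqrt q ^ 2 := (Real.sq_sqrt h0.le).symm
  generalize Real.sqrt x = s at *
  generalize Real.sqrt q = r at *
  subst hs2 hr2
  field_simp
  ring

lemma qT_step (q z : ℝ) (h0 : 0 < q) (h1 : q < 1) (hz : 0 < z) (m : ℤ) :
    (-1 : ℝ) ^ (m + 1) * z ^ (((m + 1 : ℤ) : ℝ) - 1/2) * q ^ (((m + 1 : ℤ) : ℝ) ^ 2 / 2) *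
          qTheta q (z * q ^ (m + 1)) =
    (-1 : ℝ) ^ m * z ^ ((m : ℝ) - 1/2) * q ^ ((m : ℝ) ^ 2 / 2) * qTheta q (z * q ^ m) := by
  have hqm : 0 < q ^ m := zpow_pos h0 m
  rw [zpow_add_one₀ h0.ne', ← mul_assoc z, qT_shift q _ h0 h1 (by positivity),
    zpow_add_one₀ (by norm_num : (-1 : ℝ) ≠ 0)]
  have e1 : z ^ (((m + 1 : ℤ) : ℝ) - 1/2) = z ^ ((m : ℝ) - 1/2) * z := by
    rw [← Real.rpow_add_one hz.ne']; congr 1; push_cast; ring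
  have e2 : q ^ (((m + 1 : ℤ) : ℝ) ^ 2 / 2) = q ^ ((m : ℝ) ^ 2 / 2) * q ^ m * Real.sqrt q := by
    rw [Real.sqrt_eq_rpow, ← Real.rpow_intCast, ← Real.rpow_add h0, ← Real.rpow_add h0]
    congr 1; push_cast; ring
  rw [e1, e2]
  have hr : 0 < Real.sqrt q := Real.sqrt_pos.2 h0
  field_simp

lemma qT_const (q z : ℝ) (h0 : 0 < q) (h1 : q < 1) (hz : 0 < z) (m : ℤ) :
    (-1 : ℝ) ^ m * z ^ ((m : ℝ) - 1/2) * q ^ ((m : ℝ) ^ 2 / 2) * qTheta q (z * q ^ m) =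
      (Real.sqrt z)⁻¹ * qTheta q z := by
  induction m using Int.induction_on with
  | zero => simp [Real.sqrt_eq_rpow, Real.rpow_neg hz.le]
  | succ i ih => rw [qT_step q z h0 h1 hz, ih]
  | pred i ih =>
    have := qT_step q z h0 h1 hz (-(i : ℤ) - 1)
    rw [sub_add_cancel] at this
    rw [← this, ih]

lemma qT_lim (x : ℝ) : Tendsto (fun q : ℝ => ∏' i : ℕ, (1 - x * q ^ (i + 1)))
      (𝓝[Set.Ioo (0:ℝ) 1] 0) (𝓝 1) := by
  have hs : Summable (fun i : ℕ => |x| * (1/2 : ℝ) ^ (i+1)) := by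
    refine Summable.mul_left _ ?_
    exact (summable_nat_add_iff 1).2 (summable_geometric_of_lt_one (by norm_num) (by norm_num))
  have := tendsto_tprod_one_add_of_dominated_convergence (𝓕 := 𝓝[Set.Ioo (0:ℝ) 1] 0)
    (f := fun (q : ℝ) (i : ℕ) => -(x * q ^ (i + 1))) (g := fun _ => 0) hs
    (fun i => by
      have : Continuous fun q : ℝ => -(x * q ^ (i + 1)) := by fun_prop
      simpa using (this.tendsto 0).mono_left nhdsWithin_le_nhds)
    (by
      have h2 : ∀ᶠ q : ℝ in 𝓝[Set.Ioo (0:ℝ) 1] 0, q < 1/2 :=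
        nhdsWithin_le_nhds (Iio_mem_nhds (by norm_num))
      filter_upwards [h2, self_mem_nhdsWithin] with q hq hq0 i
      have := hq0.1
      rw [norm_neg, norm_mul, Real.norm_eq_abs, norm_pow, Real.norm_of_nonneg this.le]
      gcongr)
  simpa [sub_eq_add_neg] using this

/-- For an integer `m` and real `z > 0`,
`(-1)^m z^{m-1/2} q^{m²/2} θ_q(z q^m) → 1 - z⁻¹` as `q → 0⁺`,
with `q` ranging over `(0,1)`. -/
theorem qTheta_asymptotics_integral (m : ℤ) (z : ℝ) (hz : 0 < z) :
    Tendsto (fun q : ℝ =>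
        (-1 : ℝ) ^ m * z ^ ((m : ℝ) - 1/2) * q ^ ((m : ℝ) ^ 2 / 2) *
          qTheta q (z * q ^ m))
      (𝓝[Set.Ioo (0:ℝ) 1] 0) (𝓝 (1 - z⁻¹)) := by
  have h := (((qT_lim z).mul (qT_lim z⁻¹)).const_mul
    (Real.sqrt z - (Real.sqrt z)⁻¹)).const_mul (Real.sqrt z)⁻¹
  have e : (Real.sqrt z)⁻¹ * ((Real.sqrt z - (Real.sqrt z)⁻¹) * (1 * 1)) = 1 - z⁻¹ := by
    have hs : 0 < Real.sqrt z := Real.sqrt_pos.2 hz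
    have hs2 : z = Real.sqrt z ^ 2 := (Real.sq_sqrt hz.le).symm
    generalize Real.sqrt z = s at *
    subst hs2
    field_simp
  rw [e] at h
  refine h.congr' ?_
  filter_upwards [self_mem_nhdsWithin] with q hq
  rw [qT_const q z hq.1 hq.2 hz, qT_eq q z hq.1 hq.2]
end
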